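/- arXiv:1402.5347 — 2 statements merged into one kernel-verified Lean document; each statement's English description precedes it below -/
import Mathlib

section
/- For every μ ∈ M_{k,n} (with any accompanying permutation σ of {1,…,n}) there is a finite sequence of acceptable moves which transforms (μ,σ) into a pair (μ_s,σ') in which μ_s is in special upper echelon form. -/
noncomputable section

/-- Membership in `M_{k,n}`, in `0`-indexed form: `ν a` is the (0-indexed) row of the
highlighted entry in (0-indexed) column `a`; that is, the collapsing map `μ` satisfies
`μ(k+l) = ν (l-1) + 1` for `l = 1,…,n`.  The conditions `μ(k+1) = 1` and `μ(j) < j`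
become `ν 0 = 0` and `(ν a) < k + a`. -/
def MemM (k n : ℕ) (ν : Fin n → Fin (k + n - 1)) : Prop :=
  (∀ a : Fin n, (ν a : ℕ) < k + (a : ℕ)) ∧ ∀ h : 0 < n, (ν ⟨0, h⟩ : ℕ) = 0

/-- An acceptable move at position `j = a+1`: if `μ(k+j+1) < μ(k+j)`, simultaneously exchange
the highlights in columns `j`, `j+1`, exchange the highlights in rows `k+j`, `k+j+1`, and
exchange the time labels `t_{σ^{-1}(j)}`, `t_{σ^{-1}(j+1)}`. -/
def AcceptableMove (k n : ℕ)
    (p q : (Fin n → Fin (k + n - 1)) × Equiv.Perm (Fin n)) : Prop :=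
  ∃ (a : Fin n) (ha : (a : ℕ) + 1 < n),
    ((p.1 ⟨(a : ℕ) + 1, ha⟩ : ℕ) < (p.1 a : ℕ)) ∧
    q.1 a = p.1 ⟨(a : ℕ) + 1, ha⟩ ∧ q.1 ⟨(a : ℕ) + 1, ha⟩ = p.1 a ∧
    (∀ c : Fin n, c ≠ a → c ≠ ⟨(a : ℕ) + 1, ha⟩ →
      (q.1 c : ℕ) =
        if (p.1 c : ℕ) = k + (a : ℕ) then k + (a : ℕ) + 1
        else if (p.1 c : ℕ) = k + (a : ℕ) + 1 then k + (a : ℕ)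
        else (p.1 c : ℕ)) ∧
    q.2 = Equiv.swap a ⟨(a : ℕ) + 1, ha⟩ * p.2

/-!
If `μ(i) < i` for all `i`, an acceptable move at position `j` is conjugation of `μ` by the
transposition of `k + j` and `k + j + 1`. This preserves the condition `μ(i) < i`, fixes every
column to the left of column `j`, and puts a smaller value in column `j`, so it lowers `μ`
lexicographically. Hence no infinite sequence of moves exists, and a map admitting no move has no
descent between adjacent columns.
-/

lemma swap_add_one_apply_lt {r m x : ℕ} (hm : m ≠ r + 1) (hx : x < m) :
    Equiv.swap r (r + 1) x < m := by
  rw [Equiv.swap_apply_def]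
  split_ifs <;> omega

lemma exists_descent_of_not_monotone {α : Type*} [LinearOrder α] {n : ℕ} {f : Fin n → α}
    (hf : ¬Monotone f) : ∃ (a : Fin n) (ha : (a : ℕ) + 1 < n), f ⟨a + 1, ha⟩ < f a := by
  contrapose! hf
  cases n with
  | zero => exact Subsingleton.monotone f
  | succ n => exact Fin.monotone_iff_le_succ.mpr fun i => hf i.castSucc (Nat.succ_lt_succ i.isLt)

section Exchange

variable {k n : ℕ} {i j c : Fin n} {ν : Fin n → ℕ}

/-- The map obtained from `ν` by exchanging columns `i` and `j` together with rows `k + i` and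
`k + j` of the associated matrix. Rows are natural numbers, rather than elements of
`Fin (k + n - 1)`, because `k + j = k + n - 1` when `j` is the last column. -/
def exchange (k : ℕ) (i j : Fin n) (ν : Fin n → ℕ) (c : Fin n) : ℕ :=
  Equiv.swap (k + i : ℕ) (k + j) (ν (Equiv.swap i j c))

lemma exchange_apply_left (hij : i ≤ j) (hi : ν i < k + i) (hlt : ν j < ν i) :
    exchange k i j ν i = ν j := by
  rw [exchange, Equiv.swap_apply_left, Equiv.swap_apply_of_ne_of_ne] <;> omega

lemma exchange_apply_right (hij : i ≤ j) (hi : ν i < k + i) : exchange k i j ν j = ν i := by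
  rw [exchange, Equiv.swap_apply_right, Equiv.swap_apply_of_ne_of_ne] <;> omega

lemma exchange_apply_of_ne (hi : c ≠ i) (hj : c ≠ j) :
    exchange k i j ν c = Equiv.swap (k + i : ℕ) (k + j) (ν c) := by
  rw [exchange, Equiv.swap_apply_of_ne_of_ne hi hj]

lemma exchange_apply_of_lt (hij : i ≤ j) (hci : c < i) (hc : ν c < k + c) :
    exchange k i j ν c = ν c := by
  rw [exchange_apply_of_ne hci.ne (hci.trans_le hij).ne, Equiv.swap_apply_of_ne_of_ne] <;> omega

lemma toLex_exchange_lt (hν : ∀ c, ν c < k + c) (hij : i ≤ j) (hlt : ν j < ν i) :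
    toLex (exchange k i j ν) < toLex ν :=
  ⟨i, fun c hci => exchange_apply_of_lt hij hci (hν c),
    (exchange_apply_left hij (hν i) hlt).trans_lt hlt⟩

lemma exchange_lt (hν : ∀ c, ν c < k + c) (hij : (j : ℕ) = i + 1) (hlt : ν j < ν i) (c : Fin n) :
    exchange k i j ν c < k + c := by
  have hle : i ≤ j := Fin.le_def.mpr (by omega)
  obtain rfl | hi := eq_or_ne c i
  · exact (exchange_apply_left hle (hν c) hlt).trans_lt (hlt.trans (hν c))
  obtain rfl | hj := eq_or_ne c j
  · rw [exchange_apply_right hle (hν i)]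
    exact (hν i).trans (by omega)
  · rw [exchange_apply_of_ne hi hj, hij, ← add_assoc]
    exact swap_add_one_apply_lt (by omega) (hν c)

end Exchange

section AcceptableMove

variable {k n : ℕ} {p q : (Fin n → Fin (k + n - 1)) × Equiv.Perm (Fin n)}

lemma acceptableMove_iff (hp : ∀ c, (p.1 c : ℕ) < k + c) :
    AcceptableMove k n p q ↔ ∃ (a : Fin n) (ha : (a : ℕ) + 1 < n), p.1 ⟨a + 1, ha⟩ < p.1 a ∧
      (fun c => (q.1 c : ℕ)) = exchange k a ⟨a + 1, ha⟩ (fun c => p.1 c) ∧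
      q.2 = Equiv.swap a ⟨a + 1, ha⟩ * p.2 := by
  refine exists_congr fun a => exists_congr fun ha => and_congr_right fun hlt => ?_
  set b : Fin n := ⟨a + 1, ha⟩
  have hab : a ≤ b := Fin.le_def.mpr (Nat.le_succ a)
  have left : exchange k a b (fun c => p.1 c) a = p.1 b := exchange_apply_left hab (hp a) hlt
  have right : exchange k a b (fun c => p.1 c) b = p.1 a := exchange_apply_right hab (hp a)
  simp only [← and_assoc]
  refine and_congr_left fun _ => ⟨fun ⟨⟨ha', hb'⟩, hc'⟩ => funext fun c => ?_, fun h => ?_⟩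
  · obtain rfl | hca := eq_or_ne c a
    · rw [left, ha']
    obtain rfl | hcb := eq_or_ne c b
    · rw [right, hb']
    · rw [exchange_apply_of_ne hca hcb, Equiv.swap_apply_def]
      exact hc' c hca hcb
  · refine ⟨⟨Fin.ext ((congrFun h a).trans left), Fin.ext ((congrFun h b).trans right)⟩,
      fun c hca hcb => ?_⟩
    rw [congrFun h c, exchange_apply_of_ne hca hcb, Equiv.swap_apply_def]
    rfl

lemma AcceptableMove.apply_lt (h : AcceptableMove k n p q) (hp : ∀ c, (p.1 c : ℕ) < k + c)
    (c : Fin n) : (q.1 c : ℕ) < k + c := by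
  obtain ⟨a, ha, hlt, hq, -⟩ := (acceptableMove_iff hp).mp h
  exact (congrFun hq c).trans_lt (exchange_lt hp rfl hlt c)

lemma AcceptableMove.toLex_lt (h : AcceptableMove k n p q) (hp : ∀ c, (p.1 c : ℕ) < k + c) :
    toLex (fun c => (q.1 c : ℕ)) < toLex (fun c => (p.1 c : ℕ)) := by
  obtain ⟨a, ha, hlt, hq, -⟩ := (acceptableMove_iff hp).mp h
  rw [hq]
  exact toLex_exchange_lt hp (Fin.le_def.mpr (Nat.le_succ a)) hlt

lemma exists_acceptableMove_of_not_monotone (hp : ∀ c, (p.1 c : ℕ) < k + c)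
    (hmono : ¬Monotone p.1) : ∃ q, AcceptableMove k n p q := by
  obtain ⟨a, ha, hlt⟩ := exists_descent_of_not_monotone hmono
  have hrow (c : Fin n) : exchange k a ⟨a + 1, ha⟩ (fun c => p.1 c) c < k + n - 1 :=
    (exchange_lt hp rfl hlt c).trans_le (by omega)
  exact ⟨(fun c => ⟨_, hrow c⟩, Equiv.swap a ⟨a + 1, ha⟩ * p.2),
    (acceptableMove_iff hp).mpr ⟨a, ha, hlt, rfl, rfl⟩⟩

end AcceptableMove

theorem exists_acceptableMoves_to_echelon_general {k n : ℕ}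
    (p : (Fin n → Fin (k + n - 1)) × Equiv.Perm (Fin n)) (hp : ∀ c, (p.1 c : ℕ) < k + c) :
    ∃ q, Relation.ReflTransGen (AcceptableMove k n) p q ∧ Monotone q.1 := by
  have wf : WellFounded fun q p : (Fin n → Fin (k + n - 1)) × Equiv.Perm (Fin n) =>
      toLex (fun c => (q.1 c : ℕ)) < toLex (fun c => (p.1 c : ℕ)) :=
    InvImage.wf _ wellFounded_lt
  induction p using wf.induction with
  | _ p ih =>
  by_cases hmono : Monotone p.1
  · exact ⟨p, .refl, hmono⟩
  · obtain ⟨q, hpq⟩ := exists_acceptableMove_of_not_monotone hp hmono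
    obtain ⟨r, hqr, hr⟩ := ih q (hpq.toLex_lt hp) (hpq.apply_lt hp)
    exact ⟨r, .head hpq hqr, hr⟩

/-- **Reduction to special upper echelon form.** For every `μ ∈ M_{k,n}` (with any
accompanying permutation `σ`), finitely many acceptable moves transform `(μ,σ)` into a pair
`(μ_s, σ')` where `μ_s` is in special upper echelon form, i.e. nondecreasing. -/
theorem exists_acceptableMoves_to_echelon
    (k n : ℕ) (hk : 1 ≤ k) (hn : 1 ≤ n)
    (ν : Fin n → Fin (k + n - 1)) (σ : Equiv.Perm (Fin n)) (hν : MemM k n ν) :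
    ∃ (νs : Fin n → Fin (k + n - 1)) (σ' : Equiv.Perm (Fin n)),
      Relation.ReflTransGen (AcceptableMove k n) (ν, σ) (νs, σ') ∧ Monotone νs := by
  obtain ⟨⟨νs, σ'⟩, hmoves, hmono⟩ := exists_acceptableMoves_to_echelon_general (ν, σ) hν.1
  exact ⟨νs, σ', hmoves, hmono⟩
end
end

section
/- Let C_{k,n} be the number of (k+n−1)×n special upper echelon matrices, i.e., the number of nondecreasing maps μ ∈ M_{k,n}. Then C_{k,n} ≤ 2^{k+2n−2}. -/
noncomputable section

/-!
A nondecreasing tuple is the sorted list of its values, so it is determined by the multiset of those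
values. Stars and bars bounds the number of nondecreasing `n`-tuples from `m` values by the binomial
coefficient `(m + n - 1).choose n`, hence by `2 ^ (m + n - 1)`; here `m = k + n - 1`.
-/

/-- The multiset of values of a tuple, counted with multiplicity. On monotone tuples it loses no
information, which is how they are counted. -/
def symOfFn {α : Type*} {n : ℕ} (f : Fin n → α) : Sym α n :=
  Sym.mk (List.ofFn f) (by rw [Multiset.coe_card, List.length_ofFn])

theorem symOfFn_eq_symOfFn_iff_perm {α : Type*} {n : ℕ} {f g : Fin n → α} :
    symOfFn f = symOfFn g ↔ (List.ofFn f).Perm (List.ofFn g) :=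
  Sym.coe_inj.symm.trans Multiset.coe_eq_coe

section PartialOrder

variable {α : Type*} [PartialOrder α] {n : ℕ}

theorem symOfFn_injOn_monotone : Set.InjOn symOfFn {f : Fin n → α | Monotone f} := by
  intro f hf g hg hfg
  have hperm : (List.ofFn f).Perm (List.ofFn g) := symOfFn_eq_symOfFn_iff_perm.1 hfg
  exact List.ofFn_injective
    (hperm.eq_of_pairwise' hf.sortedLE_ofFn.pairwise hg.sortedLE_ofFn.pairwise)

theorem card_monotone_le_multichoose [Finite α] :
    Nat.card {f : Fin n → α // Monotone f} ≤ (Nat.card α).multichoose n := by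
  classical
  have := Fintype.ofFinite α
  calc
    Nat.card {f : Fin n → α // Monotone f} ≤ Nat.card (Sym α n) :=
      Nat.card_le_card_of_injective _ symOfFn_injOn_monotone.injective
    _ = (Nat.card α).multichoose n := by
      rw [Nat.card_eq_fintype_card, Nat.card_eq_fintype_card, Sym.card_sym_eq_multichoose]

theorem card_special_upper_echelon_le_general [Finite α] :
    Nat.card {f : Fin n → α // Monotone f} ≤ 2 ^ (Nat.card α + n - 1) :=
  calc
    Nat.card {f : Fin n → α // Monotone f} ≤ (Nat.card α).multichoose n :=
      card_monotone_le_multichoose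
    _ = (Nat.card α + n - 1).choose n := Nat.multichoose_eq _ _
    _ ≤ 2 ^ (Nat.card α + n - 1) := Nat.choose_le_two_pow _ _

end PartialOrder

/-- **Counting special upper echelon matrices.** The number `C_{k,n}` of
`(k+n-1) × n` special upper echelon matrices, i.e. of nondecreasing maps in `M_{k,n}`,
satisfies `C_{k,n} ≤ 2^{k+2n-2}`. -/
theorem card_special_upper_echelon_le (k n : ℕ) (hk : 1 ≤ k) (hn : 1 ≤ n) :
    Nat.card {ν : Fin n → Fin (k + n - 1) // MemM k n ν ∧ Monotone ν}
      ≤ 2 ^ (k + 2 * n - 2) := by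
  have hexp : Nat.card (Fin (k + n - 1)) + n - 1 = k + 2 * n - 2 := by rw [Nat.card_fin]; lia
  rw [← hexp]
  exact (Nat.card_mono (Set.toFinite {ν | Monotone ν}) fun _ hν ↦ hν.2).trans
    card_special_upper_echelon_le_general
end
end
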